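/- arXiv:1201.6093 — 2 statements merged into one kernel-verified Lean document; each statement's English description precedes it below -/
import Mathlib

section
/- Let N be the even lattice ⟨2⟩ ⊕ U(2) ⊕ E8 of rank 11 and signature (2,9). Then the natural homomorphism O(N) → O(q_N), sending an integral isometry of N to the induced automorphism of the discriminant group A_N preserving the discriminant quadratic form q_N, is surjective. -/
open Matrix

/-- The hyperbolic plane `U`, with Gram matrix `[[0,1],[1,0]]`. -/
abbrev latU : Matrix (Fin 2) (Fin 2) ℤ := !![0, 1; 1, 0]

/-- The negative definite even unimodular lattice `E₈` (negative of the Cartan matrix). -/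
abbrev latE8 : Matrix (Fin 8) (Fin 8) ℤ :=
  !![-2,  0,  1,  0,  0,  0,  0,  0;
      0, -2,  0,  1,  0,  0,  0,  0;
      1,  0, -2,  1,  0,  0,  0,  0;
      0,  1,  1, -2,  1,  0,  0,  0;
      0,  0,  0,  1, -2,  1,  0,  0;
      0,  0,  0,  0,  1, -2,  1,  0;
      0,  0,  0,  0,  0,  1, -2,  1;
      0,  0,  0,  0,  0,  0,  1, -2]

/-- Orthogonal direct sum of two lattices (block-diagonal Gram matrix). -/
def dsum {a b : ℕ} (A : Matrix (Fin a) (Fin a) ℤ) (B : Matrix (Fin b) (Fin b) ℤ) :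
    Matrix (Fin (a + b)) (Fin (a + b)) ℤ :=
  Matrix.reindex finSumFinEquiv finSumFinEquiv (Matrix.fromBlocks A 0 0 B)


/-- Coordinatewise coercion `ℤⁿ → ℚⁿ` as a `ℤ`-linear map. -/
def castMap (n : ℕ) : (Fin n → ℤ) →ₗ[ℤ] (Fin n → ℚ) :=
  (Algebra.linearMap ℤ ℚ).compLeft (Fin n)

/-- The standard lattice `ℤⁿ ⊆ ℚⁿ`. -/
def intLat (n : ℕ) : Submodule ℤ (Fin n → ℚ) := LinearMap.range (castMap n)

/-- The dual lattice `L* = {x ∈ ℚⁿ : Gx ∈ ℤⁿ}` of the lattice with Gram matrix `G`. -/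
def dualLat {n : ℕ} (G : Matrix (Fin n) (Fin n) ℤ) : Submodule ℤ (Fin n → ℚ) :=
  Submodule.comap ((Matrix.mulVecLin (G.map (Int.cast : ℤ → ℚ))).restrictScalars ℤ) (intLat n)

/-- The discriminant group `A_L = L*/ℤⁿ`. -/
abbrev discGroup {n : ℕ} (G : Matrix (Fin n) (Fin n) ℤ) :=
  dualLat G ⧸ (intLat n).comap (dualLat G).subtype

/-- The class of a dual vector in the discriminant group `A_L`. -/
def dmk {n : ℕ} {G : Matrix (Fin n) (Fin n) ℤ} (x : dualLat G) : discGroup G :=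
  Submodule.Quotient.mk x

/-- The rational quadratic form `x ↦ xᵀGx` on `ℚⁿ`; on the dual lattice of an even lattice,
its reduction mod `2ℤ` is the discriminant quadratic form `q_L`. -/
def qQ {n : ℕ} (G : Matrix (Fin n) (Fin n) ℤ) (x : Fin n → ℚ) : ℚ :=
  x ⬝ᵥ (G.map (Int.cast : ℤ → ℚ)).mulVec x

/-- An automorphism of the discriminant group preserves the discriminant quadratic form
`q_L : A_L → ℚ/2ℤ`. -/
def PreservesDiscForm {n : ℕ} {G : Matrix (Fin n) (Fin n) ℤ}
    (φ : discGroup G ≃+ discGroup G) : Prop :=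
  ∀ x y : dualLat G, φ (dmk x) = dmk y →
    ∃ m : ℤ, qQ G (y : Fin n → ℚ) - qQ G (x : Fin n → ℚ) = 2 * m

/-- `N = ⟨2⟩ ⊕ U(2) ⊕ E8`, an even lattice of rank 11 and signature (2,9). -/
def gramN : Matrix (Fin 11) (Fin 11) ℤ := dsum (dsum !![(2 : ℤ)] (2 • latU)) latE8

/-- explicit Gram matrix -/
def gramX : Matrix (Fin 11) (Fin 11) ℤ :=
  !![2, 0, 0, 0, 0, 0, 0, 0, 0, 0, 0;
    0, 0, 2, 0, 0, 0, 0, 0, 0, 0, 0;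
    0, 2, 0, 0, 0, 0, 0, 0, 0, 0, 0;
    0, 0, 0, -2, 0, 1, 0, 0, 0, 0, 0;
    0, 0, 0, 0, -2, 0, 1, 0, 0, 0, 0;
    0, 0, 0, 1, 0, -2, 1, 0, 0, 0, 0;
    0, 0, 0, 0, 1, 1, -2, 1, 0, 0, 0;
    0, 0, 0, 0, 0, 0, 1, -2, 1, 0, 0;
    0, 0, 0, 0, 0, 0, 0, 1, -2, 1, 0;
    0, 0, 0, 0, 0, 0, 0, 0, 1, -2, 1;
    0, 0, 0, 0, 0, 0, 0, 0, 0, 1, -2]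

/-- the swap of the two isotropic generators of `U(2)` -/
def swapX : Matrix (Fin 11) (Fin 11) ℤ :=
  !![1, 0, 0, 0, 0, 0, 0, 0, 0, 0, 0;
    0, 0, 1, 0, 0, 0, 0, 0, 0, 0, 0;
    0, 1, 0, 0, 0, 0, 0, 0, 0, 0, 0;
    0, 0, 0, 1, 0, 0, 0, 0, 0, 0, 0;
    0, 0, 0, 0, 1, 0, 0, 0, 0, 0, 0;
    0, 0, 0, 0, 0, 1, 0, 0, 0, 0, 0;
    0, 0, 0, 0, 0, 0, 1, 0, 0, 0, 0;
    0, 0, 0, 0, 0, 0, 0, 1, 0, 0, 0;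
    0, 0, 0, 0, 0, 0, 0, 0, 1, 0, 0;
    0, 0, 0, 0, 0, 0, 0, 0, 0, 1, 0;
    0, 0, 0, 0, 0, 0, 0, 0, 0, 0, 1]

set_option maxRecDepth 100000 in
theorem gramN_eq : gramN = gramX := by decide +kernel

theorem mulVec_X (x : Fin 11 → ℚ) : (gramN.map (Int.cast : ℤ → ℚ)).mulVec x =
    ![2 * x 0, 2 * x 2, 2 * x 1,

      (-2) * x 3 + (1) * x 5,
      (-2) * x 4 + (1) * x 6,
      (1) * x 3 + (-2) * x 5 + (1) * x 6,
      (1) * x 4 + (1) * x 5 + (-2) * x 6 + (1) * x 7,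
      (1) * x 6 + (-2) * x 7 + (1) * x 8,
      (1) * x 7 + (-2) * x 8 + (1) * x 9,
      (1) * x 8 + (-2) * x 9 + (1) * x 10,
      (1) * x 9 + (-2) * x 10] := by
  rw [gramN_eq]
  ext i
  fin_cases i <;> simp [gramX, Matrix.mulVec, dotProduct, Fin.sum_univ_succ] <;> try ring

theorem mem_int {n : ℕ} (v : Fin n → ℚ) : v ∈ intLat n ↔ ∃ z : Fin n → ℤ, ∀ i, (z i : ℚ) = v i := by
  constructor
  · rintro ⟨z, rfl⟩
    exact ⟨z, fun i => rfl⟩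
  · rintro ⟨z, hz⟩
    exact ⟨z, funext hz⟩

theorem mem_dual {n : ℕ} (G : Matrix (Fin n) (Fin n) ℤ) (v : Fin n → ℚ) :
    v ∈ dualLat G ↔ (G.map (Int.cast : ℤ → ℚ)).mulVec v ∈ intLat n := Iff.rfl

theorem dmk_eq_iff {n : ℕ} {G : Matrix (Fin n) (Fin n) ℤ} (x y : dualLat G) :
    dmk x = dmk y ↔ ∃ z : Fin n → ℤ, ∀ i, (z i : ℚ) = x.1 i - y.1 i := by
  unfold dmk
  rw [Submodule.Quotient.eq, Submodule.mem_comap, mem_int]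
  rfl

theorem dmk_add {n : ℕ} {G : Matrix (Fin n) (Fin n) ℤ} (x y : dualLat G) :
    dmk (x + y) = dmk x + dmk y := rfl

theorem dmk_surj {n : ℕ} {G : Matrix (Fin n) (Fin n) ℤ} (u : discGroup G) :
    ∃ x, dmk x = u := Submodule.Quotient.mk_surjective _ u

/-- the dual vector with coordinates a/2, b/2, c/2 -/
def vE (a b c : ℤ) : dualLat gramN :=
  ⟨![a / 2, b / 2, c / 2, 0, 0, 0, 0, 0, 0, 0, 0], by
    rw [mem_dual, mulVec_X, mem_int]
    refine ⟨![a, c, b, 0, 0, 0, 0, 0, 0, 0, 0], fun i => ?_⟩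
    fin_cases i <;> simp <;> ring⟩

theorem dual_coords (x : dualLat gramN) : ∃ z w : Fin 11 → ℤ,
    ((z 0 : ℚ) = 2 * x.1 0 ∧ (z 2 : ℚ) = 2 * x.1 1 ∧ (z 1 : ℚ) = 2 * x.1 2) ∧
    ∀ i, 3 ≤ i → (w i : ℚ) = x.1 i := by
  obtain ⟨x, hx⟩ := x
  rw [mem_dual, mulVec_X, mem_int] at hx
  obtain ⟨z, hz⟩ := hx
  have e0 := hz 0
  have e1 := hz 1
  have e2 := hz 2
  have e3 := hz 3
  have e4 := hz 4
  have e5 := hz 5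
  have e6 := hz 6
  have e7 := hz 7
  have e8 := hz 8
  have e9 := hz 9
  have e10 := hz 10
  simp at e0 e1 e2 e3 e4 e5 e6 e7 e8 e9 e10
  refine ⟨z, ![0, 0, 0,
    ((-4) * z 3 + (-5) * z 4 + (-7) * z 5 + (-10) * z 6 + (-8) * z 7 + (-6) * z 8 + (-4) * z 9 + (-2) * z 10),
    ((-5) * z 3 + (-8) * z 4 + (-10) * z 5 + (-15) * z 6 + (-12) * z 7 + (-9) * z 8 + (-6) * z 9 + (-3) * z 10),
    ((-7) * z 3 + (-10) * z 4 + (-14) * z 5 + (-20) * z 6 + (-16) * z 7 + (-12) * z 8 + (-8) * z 9 + (-4) * z 10),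
    ((-10) * z 3 + (-15) * z 4 + (-20) * z 5 + (-30) * z 6 + (-24) * z 7 + (-18) * z 8 + (-12) * z 9 + (-6) * z 10),
    ((-8) * z 3 + (-12) * z 4 + (-16) * z 5 + (-24) * z 6 + (-20) * z 7 + (-15) * z 8 + (-10) * z 9 + (-5) * z 10),
    ((-6) * z 3 + (-9) * z 4 + (-12) * z 5 + (-18) * z 6 + (-15) * z 7 + (-12) * z 8 + (-8) * z 9 + (-4) * z 10),
    ((-4) * z 3 + (-6) * z 4 + (-8) * z 5 + (-12) * z 6 + (-10) * z 7 + (-8) * z 8 + (-6) * z 9 + (-3) * z 10),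
    ((-2) * z 3 + (-3) * z 4 + (-4) * z 5 + (-6) * z 6 + (-5) * z 7 + (-4) * z 8 + (-3) * z 9 + (-2) * z 10)], ⟨by linarith, by linarith, by linarith⟩, ?_⟩
  intro i hi
  fin_cases i <;> first | (exfalso; revert hi; decide) | (simp; linarith)

theorem dmk_vE (x : dualLat gramN) (a b c : ℤ) (ha : x.1 0 = a / 2) (hb : x.1 1 = b / 2)
    (hc : x.1 2 = c / 2) : dmk x = dmk (vE a b c) := by
  rw [dmk_eq_iff]
  obtain ⟨z, w, -, hw⟩ := dual_coords x
  refine ⟨fun i => if 3 ≤ i then w i else 0, fun i => ?_⟩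
  by_cases h : 3 ≤ i
  · simp only [h, if_true]
    rw [hw i h]
    fin_cases i <;> first | (exfalso; revert h; decide) | simp [vE]
  · simp only [h, if_false]
    fin_cases i <;> first | (exfalso; revert h; decide) | simp [vE, *]

theorem vE_add (a b c a' b' c' : ℤ) :
    dmk (vE a b c) + dmk (vE a' b' c') = dmk (vE (a + a') (b + b') (c + c')) := by
  rw [← dmk_add]
  apply dmk_vE <;> simp [vE] <;> ring

theorem vE_parity (a b c a' b' c' : ℤ) :
    dmk (vE a b c) = dmk (vE a' b' c') ↔ (2 ∣ a - a' ∧ 2 ∣ b - b' ∧ 2 ∣ c - c') := by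
  rw [dmk_eq_iff]
  constructor
  · rintro ⟨z, hz⟩
    have h0 := hz 0
    have h1 := hz 1
    have h2 := hz 2
    simp [vE] at h0 h1 h2
    refine ⟨⟨z 0, ?_⟩, ⟨z 1, ?_⟩, ⟨z 2, ?_⟩⟩
    · have : (a - a' : ℚ) = 2 * z 0 := by linarith
      exact_mod_cast this
    · have : (b - b' : ℚ) = 2 * z 1 := by linarith
      exact_mod_cast this
    · have : (c - c' : ℚ) = 2 * z 2 := by linarith
      exact_mod_cast this
  · rintro ⟨⟨u, hu⟩, ⟨v, hv⟩, ⟨w, hw⟩⟩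
    have hu' : (a - a' : ℚ) = 2 * u := by exact_mod_cast hu
    have hv' : (b - b' : ℚ) = 2 * v := by exact_mod_cast hv
    have hw' : (c - c' : ℚ) = 2 * w := by exact_mod_cast hw
    refine ⟨![u, v, w, 0, 0, 0, 0, 0, 0, 0, 0], fun i => ?_⟩
    fin_cases i <;> simp [vE] <;> linarith

theorem vE_exists (u : discGroup gramN) : ∃ a b c : ℤ, (a = 0 ∨ a = 1) ∧ (b = 0 ∨ b = 1) ∧
    (c = 0 ∨ c = 1) ∧ u = dmk (vE a b c) := by
  obtain ⟨x, rfl⟩ := dmk_surj u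
  obtain ⟨z, w, ⟨h0, h1, h2⟩, -⟩ := dual_coords x
  refine ⟨z 0 % 2, z 2 % 2, z 1 % 2, by omega, by omega, by omega, ?_⟩
  rw [dmk_vE x (z 0) (z 2) (z 1) (by linarith) (by linarith) (by linarith), vE_parity]
  refine ⟨?_, ?_, ?_⟩ <;> omega

theorem q_vE (a b c : ℤ) : qQ gramN (vE a b c).1 = a * a / 2 + b * c := by
  unfold qQ
  rw [mulVec_X]
  simp [vE, dotProduct, Fin.sum_univ_succ]
  ring

theorem q_pres {φ : discGroup gramN ≃+ discGroup gramN} (h : PreservesDiscForm φ)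
    {a b c a' b' c' : ℤ} (e : φ (dmk (vE a b c)) = dmk (vE a' b' c')) :
    ∃ m : ℤ, (a' * a' + 2 * (b' * c')) - (a * a + 2 * (b * c)) = 4 * m := by
  obtain ⟨m, hm⟩ := h _ _ e
  rw [q_vE, q_vE] at hm
  refine ⟨m, ?_⟩
  have : ((a' * a' + 2 * (b' * c')) - (a * a + 2 * (b * c)) : ℚ) = 4 * m := by linarith
  exact_mod_cast this

theorem vE_iso {φ : discGroup gramN ≃+ discGroup gramN} (h : PreservesDiscForm φ) (b c : ℤ)
    (hbc : b * c = 0) (hn : ¬ (2 ∣ b ∧ 2 ∣ c)) :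
    φ (dmk (vE 0 b c)) = dmk (vE 0 1 0) ∨ φ (dmk (vE 0 b c)) = dmk (vE 0 0 1) := by
  obtain ⟨a', b', c', ha, hb, hc, e⟩ := vE_exists (φ (dmk (vE 0 b c)))
  obtain ⟨m, hm⟩ := q_pres h e
  rw [hbc] at hm
  have h0 : φ (dmk (vE 0 0 0)) = dmk (vE 0 0 0) := by
    have : dmk (vE 0 0 0) = (0 : discGroup gramN) := by
      have := vE_add 0 0 0 0 0 0
      simpa using this
    rw [this, map_zero]
  rcases ha with rfl | rfl <;> rcases hb with rfl | rfl <;> rcases hc with rfl | rfl <;>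
    first
    | exact Or.inl e
    | exact Or.inr e
    | (exfalso; omega)
    | (exfalso
       rw [← h0] at e
       have e' := (vE_parity _ _ _ _ _ _).1 (φ.injective e)
       simp at e'
       omega)

theorem vE_top {φ : discGroup gramN ≃+ discGroup gramN} (h : PreservesDiscForm φ) :
    φ (dmk (vE 1 1 1)) = dmk (vE 1 1 1) := by
  obtain ⟨a', b', c', ha, hb, hc, e⟩ := vE_exists (φ (dmk (vE 1 1 1)))
  obtain ⟨m, hm⟩ := q_pres h e
  rcases ha with rfl | rfl <;> rcases hb with rfl | rfl <;> rcases hc with rfl | rfl <;>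
    first
    | exact e
    | (exfalso; omega)

theorem vE_zsmul (n a b c : ℤ) : n • dmk (vE a b c) = dmk (vE (n * a) (n * b) (n * c)) := by
  have : n • dmk (vE a b c) = dmk (n • vE a b c) := rfl
  rw [this]
  apply dmk_vE <;> simp [vE] <;> ring

theorem phi_gen (φ : discGroup gramN ≃+ discGroup gramN) (a b c : ℤ) :
    φ (dmk (vE a b c)) = a • φ (dmk (vE 1 0 0)) + b • φ (dmk (vE 0 1 0))
      + c • φ (dmk (vE 0 0 1)) := by
  rw [← map_zsmul, ← map_zsmul, ← map_zsmul, ← map_add, ← map_add, vE_zsmul, vE_zsmul, vE_zsmul,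
    vE_add, vE_add]
  simp

theorem phi_cases {φ : discGroup gramN ≃+ discGroup gramN} (h : PreservesDiscForm φ) :
    (∀ a b c, φ (dmk (vE a b c)) = dmk (vE a b c)) ∨
    (∀ a b c, φ (dmk (vE a b c)) = dmk (vE a c b)) := by
  have h2 := vE_iso h 1 0 (by norm_num) (by decide)
  have h3 := vE_iso h 0 1 (by norm_num) (by decide)
  have hne : φ (dmk (vE 0 1 0)) ≠ φ (dmk (vE 0 0 1)) := by
    intro e
    have e' := (vE_parity _ _ _ _ _ _).1 (φ.injective e)
    revert e'
    decide
  have ht := vE_top h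
  rw [phi_gen] at ht
  have key : φ (dmk (vE 1 0 0)) = dmk (vE 1 1 1) + dmk (vE 0 (-1) 0) + dmk (vE 0 0 (-1)) → 
      φ (dmk (vE 1 0 0)) = dmk (vE 1 0 0) := by
    intro e
    rw [e, vE_add, vE_add]
    simp
  have n2 : dmk (vE 0 (-1) 0) = -dmk (vE 0 1 0) := by
    rw [← neg_one_zsmul (dmk _), vE_zsmul]; simp
  have n3 : dmk (vE 0 0 (-1)) = -dmk (vE 0 0 1) := by
    rw [← neg_one_zsmul (dmk _), vE_zsmul]; simp
  rcases h2 with h2 | h2 <;> rcases h3 with h3 | h3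
  · exact absurd (h2.trans h3.symm) hne
  · left
    have h1 := key (by rw [← ht, h2, h3, n2, n3]; simp only [one_zsmul]; abel)
    intro a b c
    rw [phi_gen, h1, h2, h3, vE_zsmul, vE_zsmul, vE_zsmul, vE_add, vE_add]
    simp
  · right
    have h1 := key (by rw [← ht, h2, h3, n2, n3]; simp only [one_zsmul]; abel)
    intro a b c
    rw [phi_gen, h1, h2, h3, vE_zsmul, vE_zsmul, vE_zsmul, vE_add, vE_add]
    simp
  · exact absurd (h2.trans h3.symm) hne

set_option maxRecDepth 100000 in
theorem swap_sq : swapX * swapX = 1 := by decide +kernel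

set_option maxRecDepth 100000 in
theorem swap_gram : swapXᵀ * gramN * swapX = gramN := by decide +kernel

theorem swap_mulVec (x : Fin 11 → ℚ) : (swapX.map (Int.cast : ℤ → ℚ)).mulVec x 0 = x 0 ∧
    (swapX.map (Int.cast : ℤ → ℚ)).mulVec x 1 = x 2 ∧
    (swapX.map (Int.cast : ℤ → ℚ)).mulVec x 2 = x 1 := by
  refine ⟨?_, ?_, ?_⟩ <;> simp [swapX, Matrix.mulVec, dotProduct, Fin.sum_univ_succ]

/-- The natural homomorphism `O(N) → O(q_N)` is surjective for `N = ⟨2⟩ ⊕ U(2) ⊕ E8` :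
every automorphism of the discriminant group preserving the discriminant quadratic form
is induced by an integral isometry `P` of `N` (which acts on `N* ⊆ ℚ¹¹` by `x ↦ Px`). -/
theorem O_to_Oq_surjective_N' :
    ∀ φ : discGroup gramN ≃+ discGroup gramN, PreservesDiscForm φ →
      ∃ P : Matrix (Fin 11) (Fin 11) ℤ, IsUnit P.det ∧ Pᵀ * gramN * P = gramN ∧
        ∀ x y : dualLat gramN,
          (y : Fin 11 → ℚ) = (P.map (Int.cast : ℤ → ℚ)).mulVec (x : Fin 11 → ℚ) →
            φ (dmk x) = dmk y := by
  intro φ h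
  rcases phi_cases h with hc | hc
  · refine ⟨1, by simp, by simp, fun x y hxy => ?_⟩
    have : y = x := by
      apply Subtype.ext
      rw [hxy, Matrix.map_one _ Int.cast_zero Int.cast_one, Matrix.one_mulVec]
    subst this
    obtain ⟨z, w, ⟨h0, h1, h2⟩, -⟩ := dual_coords y
    rw [dmk_vE y (z 0) (z 2) (z 1) (by linarith) (by linarith) (by linarith), hc]
  · refine ⟨swapX, ?_, swap_gram, fun x y hxy => ?_⟩
    · rw [← Matrix.isUnit_iff_isUnit_det]
      exact IsUnit.of_mul_eq_one _ swap_sq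
    · obtain ⟨s0, s1, s2⟩ := swap_mulVec x.1
      rw [← hxy] at s0 s1 s2
      obtain ⟨z, w, ⟨h0, h1, h2⟩, -⟩ := dual_coords x
      rw [dmk_vE x (z 0) (z 2) (z 1) (by linarith) (by linarith) (by linarith), hc,
        dmk_vE y (z 0) (z 1) (z 2) (by linarith) (by linarith) (by linarith)]
end

section
/- In the K3 lattice L_{K3} = E8 ⊕ E8 ⊕ U ⊕ U ⊕ U of rank 22, there exists a primitive sublattice M (a ℤ-submodule with torsion-free quotient L_{K3}/M) of rank 11 such that M with the restricted form is isometric to U ⊕ D8 ⊕ A1, and the orthogonal complement M^⊥ = {x ∈ L_{K3} : x·m = 0 for all m ∈ M} with the restricted form is isometric to ⟨2⟩ ⊕ U(2) ⊕ E8. -/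
open Matrix

/-- The bilinear form of the lattice with Gram matrix `G` : `x ⋅ y = xᵀ G y`. -/
def bform {n : ℕ} (G : Matrix (Fin n) (Fin n) ℤ) (x y : Fin n → ℤ) : ℤ :=
  x ⬝ᵥ G.mulVec y


/-- The negative definite lattice `D₈` (negative of the Cartan matrix of `D₈`). -/
abbrev latD8 : Matrix (Fin 8) (Fin 8) ℤ :=
  !![-2,  1,  0,  0,  0,  0,  0,  0;
      1, -2,  1,  0,  0,  0,  0,  0;
      0,  1, -2,  1,  0,  0,  0,  0;
      0,  0,  1, -2,  1,  0,  0,  0;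
      0,  0,  0,  1, -2,  1,  0,  0;
      0,  0,  0,  0,  1, -2,  1,  1;
      0,  0,  0,  0,  0,  1, -2,  0;
      0,  0,  0,  0,  0,  1,  0, -2]

/-- The K3 lattice `L_{K3} = E8 ⊕ E8 ⊕ U ⊕ U ⊕ U` of rank 22. -/
def gramK3 : Matrix (Fin 22) (Fin 22) ℤ :=
  dsum latE8 (dsum latE8 (dsum latU (dsum latU latU)))

/-- `M = U ⊕ D8 ⊕ A1`. -/
def gramM : Matrix (Fin 11) (Fin 11) ℤ := dsum (dsum latU latD8) !![(-2 : ℤ)]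

/-- Rows: a basis of the sublattice `U ⊕ D8 ⊕ A1`. -/
def matA : Matrix (Fin 11) (Fin 22) ℤ :=
  !![0, 0, 0, 0, 0, 0, 0, 0, 0, 0, 0, 0, 0, 0, 0, 0, 1, 0, 0, 0, 0, 0;
     0, 0, 0, 0, 0, 0, 0, 0, 0, 0, 0, 0, 0, 0, 0, 0, 0, 1, 0, 0, 0, 0;
     -2, -3, -4, -6, -5, -4, -3, -2, 0, 0, 0, 0, 0, 0, 0, 0, 0, 0, 0, 0, 0, 0;
     0, 0, 0, 0, 0, 0, 0, 1, 0, 0, 0, 0, 0, 0, 0, 0, 0, 0, 0, 0, 0, 0;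
     0, 0, 0, 0, 0, 0, 1, 0, 0, 0, 0, 0, 0, 0, 0, 0, 0, 0, 0, 0, 0, 0;
     0, 0, 0, 0, 0, 1, 0, 0, 0, 0, 0, 0, 0, 0, 0, 0, 0, 0, 0, 0, 0, 0;
     0, 0, 0, 0, 1, 0, 0, 0, 0, 0, 0, 0, 0, 0, 0, 0, 0, 0, 0, 0, 0, 0;
     0, 0, 0, 1, 0, 0, 0, 0, 0, 0, 0, 0, 0, 0, 0, 0, 0, 0, 0, 0, 0, 0;
     0, 1, 0, 0, 0, 0, 0, 0, 0, 0, 0, 0, 0, 0, 0, 0, 0, 0, 1, 0, 0, 0;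
     0, 0, 1, 0, 0, 0, 0, 0, 0, 0, 0, 0, 0, 0, 0, 0, 0, 0, 0, 0, 0, 0;
     0, 0, 0, 0, 0, 0, 0, 0, 0, 0, 0, 0, 0, 0, 0, 0, 0, 0, 0, 0, 1, -1]

/-- Rows: a basis of its orthogonal complement. -/
def matB : Matrix (Fin 11) (Fin 22) ℤ :=
  !![0, 0, 0, 0, 0, 0, 0, 0, 0, 0, 0, 0, 0, 0, 0, 0, 0, 0, 0, 0, 1, 1;
     0, 0, 0, 0, 0, 0, 0, 0, 0, 0, 0, 0, 0, 0, 0, 0, 0, 0, 1, 0, 0, 0;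
     -2, 1, -1, 0, 0, 0, 0, 0, 0, 0, 0, 0, 0, 0, 0, 0, 0, 0, 2, 2, 0, 0;
     0, 0, 0, 0, 0, 0, 0, 0, 1, 0, 0, 0, 0, 0, 0, 0, 0, 0, 0, 0, 0, 0;
     0, 0, 0, 0, 0, 0, 0, 0, 0, 1, 0, 0, 0, 0, 0, 0, 0, 0, 0, 0, 0, 0;
     0, 0, 0, 0, 0, 0, 0, 0, 0, 0, 1, 0, 0, 0, 0, 0, 0, 0, 0, 0, 0, 0;
     0, 0, 0, 0, 0, 0, 0, 0, 0, 0, 0, 1, 0, 0, 0, 0, 0, 0, 0, 0, 0, 0;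
     0, 0, 0, 0, 0, 0, 0, 0, 0, 0, 0, 0, 1, 0, 0, 0, 0, 0, 0, 0, 0, 0;
     0, 0, 0, 0, 0, 0, 0, 0, 0, 0, 0, 0, 0, 1, 0, 0, 0, 0, 0, 0, 0, 0;
     0, 0, 0, 0, 0, 0, 0, 0, 0, 0, 0, 0, 0, 0, 1, 0, 0, 0, 0, 0, 0, 0;
     0, 0, 0, 0, 0, 0, 0, 0, 0, 0, 0, 0, 0, 0, 0, 1, 0, 0, 0, 0, 0, 0]

/-- Right inverse of `matA`. -/
def matP : Matrix (Fin 22) (Fin 11) ℤ :=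
  !![0, 0, 1, -1, 0, -2, -1, -3, 0, -2, 0;
     0, 0, -1, 0, -1, 0, -1, 0, 0, 0, 0;
     0, 0, 0, 0, 0, 0, 0, 0, 0, 1, 0;
     0, 0, 0, 0, 0, 0, 0, 1, 0, 0, 0;
     0, 0, 0, 0, 0, 0, 1, 0, 0, 0, 0;
     0, 0, 0, 0, 0, 1, 0, 0, 0, 0, 0;
     0, 0, 0, 0, 1, 0, 0, 0, 0, 0, 0;
     0, 0, 0, 1, 0, 0, 0, 0, 0, 0, 0;
     0, 0, 0, 0, 0, 0, 0, 0, 0, 0, 0;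
     0, 0, 0, 0, 0, 0, 0, 0, 0, 0, 0;
     0, 0, 0, 0, 0, 0, 0, 0, 0, 0, 0;
     0, 0, 0, 0, 0, 0, 0, 0, 0, 0, 0;
     0, 0, 0, 0, 0, 0, 0, 0, 0, 0, 0;
     0, 0, 0, 0, 0, 0, 0, 0, 0, 0, 0;
     0, 0, 0, 0, 0, 0, 0, 0, 0, 0, 0;
     0, 0, 0, 0, 0, 0, 0, 0, 0, 0, 0;
     1, 0, 0, 0, 0, 0, 0, 0, 0, 0, 0;
     0, 1, 0, 0, 0, 0, 0, 0, 0, 0, 0;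
     0, 0, 1, 0, 1, 0, 1, 0, 1, 0, 0;
     0, 0, 0, 0, 0, 0, 0, 0, 0, 0, 0;
     0, 0, 0, 0, 0, 0, 0, 0, 0, 0, 1;
     0, 0, 0, 0, 0, 0, 0, 0, 0, 0, 0]

/-- Right inverse of `matB`. -/
def matQ : Matrix (Fin 22) (Fin 11) ℤ :=
  !![0, 0, 0, 0, 0, 0, 0, 0, 0, 0, 0;
     0, 0, 0, 0, 0, 0, 0, 0, 0, 0, 0;
     0, 2, -1, 0, 0, 0, 0, 0, 0, 0, 0;
     0, 0, 0, 0, 0, 0, 0, 0, 0, 0, 0;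
     0, 0, 0, 0, 0, 0, 0, 0, 0, 0, 0;
     0, 0, 0, 0, 0, 0, 0, 0, 0, 0, 0;
     0, 0, 0, 0, 0, 0, 0, 0, 0, 0, 0;
     0, 0, 0, 0, 0, 0, 0, 0, 0, 0, 0;
     0, 0, 0, 1, 0, 0, 0, 0, 0, 0, 0;
     0, 0, 0, 0, 1, 0, 0, 0, 0, 0, 0;
     0, 0, 0, 0, 0, 1, 0, 0, 0, 0, 0;
     0, 0, 0, 0, 0, 0, 1, 0, 0, 0, 0;
     0, 0, 0, 0, 0, 0, 0, 1, 0, 0, 0;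
     0, 0, 0, 0, 0, 0, 0, 0, 1, 0, 0;
     0, 0, 0, 0, 0, 0, 0, 0, 0, 1, 0;
     0, 0, 0, 0, 0, 0, 0, 0, 0, 0, 1;
     0, 0, 0, 0, 0, 0, 0, 0, 0, 0, 0;
     0, 0, 0, 0, 0, 0, 0, 0, 0, 0, 0;
     0, 1, 0, 0, 0, 0, 0, 0, 0, 0, 0;
     0, 0, 0, 0, 0, 0, 0, 0, 0, 0, 0;
     1, 0, 0, 0, 0, 0, 0, 0, 0, 0, 0;
     0, 0, 0, 0, 0, 0, 0, 0, 0, 0, 0]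

/-- Certificate that the rows of `matB` span the complement. -/
def matR : Matrix (Fin 11) (Fin 22) ℤ :=
  !![0, 0, 0, 0, 0, 0, 0, 0, 0, 0, 0, 0, 0, 0, 0, 0, 0, 1, 0, 0, 0, 0;
     0, 0, 0, 0, 0, 0, 0, 0, 0, 0, 0, 0, 0, 0, 0, 0, 1, 0, 0, 0, 0, 0;
     -5, 6, 0, 5, 4, 3, 2, 1, 0, 0, 0, 0, 0, 0, 0, 0, 0, 0, 0, 7, 0, 0;
     -4, 5, 0, 4, 3, 2, 1, 0, 0, 0, 0, 0, 0, 0, 0, 0, 0, 0, 0, 6, 0, 0;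
     -3, 4, 0, 3, 2, 1, 0, 0, 0, 0, 0, 0, 0, 0, 0, 0, 0, 0, 0, 5, 0, 0;
     -2, 3, 0, 2, 1, 0, 0, 0, 0, 0, 0, 0, 0, 0, 0, 0, 0, 0, 0, 4, 0, 0;
     -1, 2, 0, 1, 0, 0, 0, 0, 0, 0, 0, 0, 0, 0, 0, 0, 0, 0, 0, 3, 0, 0;
     0, 1, 0, 0, 0, 0, 0, 0, 0, 0, 0, 0, 0, 0, 0, 0, 0, 0, 0, 2, 0, 0;
     0, 0, 0, 0, 0, 0, 0, 0, 0, 0, 0, 0, 0, 0, 0, 0, 0, 0, 0, 1, 0, 0;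
     1, 0, 0, 0, 0, 0, 0, 0, 0, 0, 0, 0, 0, 0, 0, 0, 0, 0, 0, 0, 0, 0;
     0, 0, 0, 0, 0, 0, 0, 0, 0, 0, 0, 0, 0, 0, 0, 0, 0, 0, 0, 0, 0, 1]

lemma matAP : matA * matP = 1 := by decide +kernel
lemma matBQ : matB * matQ = 1 := by decide +kernel
lemma matA_gram : matA * gramK3 * matAᵀ = gramM := by decide +kernel
lemma matB_gram : matB * gramK3 * matBᵀ = gramN := by decide +kernel
lemma matBA : matB * gramK3 * matAᵀ = 0 := by decide +kernel
lemma mat_cert : matQ * matB + gramK3 * matAᵀ * matR = 1 := by decide +kernel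

lemma bform_vecMul {m n k : ℕ} (G : Matrix (Fin n) (Fin n) ℤ) (A : Matrix (Fin m) (Fin n) ℤ)
    (B : Matrix (Fin k) (Fin n) ℤ) (s : Fin m → ℤ) (t : Fin k → ℤ) :
    bform G (s ᵥ* A) (t ᵥ* B) = s ⬝ᵥ (A * G * Bᵀ) *ᵥ t := by
  unfold bform
  rw [← Matrix.mulVec_transpose B, ← Matrix.dotProduct_mulVec, Matrix.mulVec_mulVec,
    Matrix.mulVec_mulVec, Matrix.mul_assoc]

lemma exists_isometry {m n : ℕ} (G : Matrix (Fin n) (Fin n) ℤ) (g : Matrix (Fin m) (Fin m) ℤ)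
    (A : Matrix (Fin m) (Fin n) ℤ) (P : Matrix (Fin n) (Fin m) ℤ) (h : A * P = 1)
    (hg : A * G * Aᵀ = g) :
    ∃ e : LinearMap.range A.vecMulLinear ≃ₗ[ℤ] (Fin m → ℤ),
      ∀ x y : LinearMap.range A.vecMulLinear, bform g (e x) (e y) = bform G x y := by
  have inj : Function.Injective A.vecMulLinear := by
    intro s t hst
    have h2 : (s ᵥ* A) ᵥ* P = (t ᵥ* A) ᵥ* P := congrArg (fun v => v ᵥ* P) hst
    simpa [Matrix.vecMul_vecMul, h] using h2
  let E := LinearEquiv.ofInjective A.vecMulLinear inj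
  refine ⟨E.symm, fun x y => ?_⟩
  obtain ⟨s, rfl⟩ := E.surjective x
  obtain ⟨t, rfl⟩ := E.surjective y
  rw [E.symm_apply_apply, E.symm_apply_apply]
  have h1 : ∀ u, (E u : Fin n → ℤ) = u ᵥ* A := fun u => rfl
  rw [h1, h1, bform_vecMul, hg, bform]

/-- There is a primitive rank-11 sublattice `M` of the K3 lattice isometric to
`U ⊕ D8 ⊕ A1` whose orthogonal complement `M^⊥` is isometric to `⟨2⟩ ⊕ U(2) ⊕ E8`. -/
theorem exists_primitive_UD8A1_in_K3 :
    ∃ M : Submodule ℤ (Fin 22 → ℤ),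
      (∀ c : ℤ, c ≠ 0 → ∀ x, c • x ∈ M → x ∈ M) ∧
      (∃ e : M ≃ₗ[ℤ] (Fin 11 → ℤ),
        ∀ x y : M, bform gramM (e x) (e y) = bform gramK3 x y) ∧
      ∃ W : Submodule ℤ (Fin 22 → ℤ),
        (∀ x, x ∈ W ↔ ∀ m ∈ M, bform gramK3 x m = 0) ∧
        ∃ f : W ≃ₗ[ℤ] (Fin 11 → ℤ),
          ∀ x y : W, bform gramN (f x) (f y) = bform gramK3 x y := by
  refine ⟨LinearMap.range matA.vecMulLinear, ?_, exists_isometry _ _ _ _ matAP matA_gram,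
    LinearMap.range matB.vecMulLinear, ?_, exists_isometry _ _ _ _ matBQ matB_gram⟩
  · rintro c hc x ⟨t, ht⟩
    have ht : t ᵥ* matA = c • x := ht
    refine ⟨x ᵥ* matP, ?_⟩
    change (x ᵥ* matP) ᵥ* matA = x
    have h1 : c • ((x ᵥ* matP) ᵥ* matA) = c • x := by
      rw [← Matrix.smul_vecMul, ← Matrix.smul_vecMul, ← ht, Matrix.vecMul_vecMul t, matAP,
        Matrix.vecMul_one]
    exact smul_right_injective _ hc h1
  · intro x
    constructor
    · rintro ⟨s, rfl⟩ m ⟨t, rfl⟩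
      change bform gramK3 (s ᵥ* matB) (t ᵥ* matA) = 0
      rw [bform_vecMul, matBA, Matrix.zero_mulVec, dotProduct_zero]
    · intro h
      have h0 : x ᵥ* (gramK3 * matAᵀ) = 0 := by
        apply dotProduct_eq_zero
        intro t
        have h1 := h (t ᵥ* matA) ⟨t, rfl⟩
        have h2 := bform_vecMul gramK3 1 matA x t
        rw [Matrix.vecMul_one, h1, Matrix.one_mul] at h2
        rw [← Matrix.dotProduct_mulVec, ← h2]
      refine ⟨x ᵥ* matQ, ?_⟩
      change (x ᵥ* matQ) ᵥ* matB = x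
      have h3 := congrArg (fun N => x ᵥ* N) mat_cert
      simp only [Matrix.vecMul_add, Matrix.vecMul_one] at h3
      rw [← Matrix.vecMul_vecMul x (gramK3 * matAᵀ), h0, Matrix.zero_vecMul, add_zero] at h3
      rw [Matrix.vecMul_vecMul, h3]
end
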